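/- arXiv:2102.13444 — 2 statements merged into one kernel-verified Lean document; each statement's English description precedes it below -/
import Mathlib

section
/- The criticality measure ω is continuous on X: for every sequence x⁽ᵗ⁾ ∈ X with x⁽ᵗ⁾ → x ∈ X one has ω(x⁽ᵗ⁾) → ω(x). (Theorem 2.2(2), proved in Appendix A.1.) -/
noncomputable section

/-- The ℓ^∞ (maximum) norm on Euclidean space. -/
def supNorm {n : ℕ} (v : EuclideanSpace ℝ (Fin n)) : ℝ :=
  ‖(WithLp.equiv 2 (Fin n → ℝ)) v‖

/-- The multiobjective criticality measure
`ω(x) = − inf { max_ℓ ⟨∇f_ℓ(x), d⟩ : x + d ∈ X, ‖d‖_∞ ≤ 1 }`. -/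
def omega {n k : ℕ} (X : Set (EuclideanSpace ℝ (Fin n)))
    (f : Fin k → EuclideanSpace ℝ (Fin n) → ℝ) (x : EuclideanSpace ℝ (Fin n)) : ℝ :=
  - sInf ((fun d => ⨆ ℓ, fderiv ℝ (f ℓ) x d) ''
      {d : EuclideanSpace ℝ (Fin n) | x + d ∈ X ∧ supNorm d ≤ 1})

/-!
For `a, b ∈ X` and a feasible direction `d` at `a`, the point `a + d` of `X` is reached from `b` by
the displacement `d + (a - b)`, of norm at most `1 + ‖a - b‖`. By convexity of `X` the direction
`(1 + ‖a - b‖)⁻¹ • (d + (a - b))` is feasible at `b`, and it lies within `2 * ‖a - b‖` of `d`.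
Since the maximum of finitely many linear functionals is Lipschitz both in the functionals and in
the direction, the two infima differ by at most a constant times
`‖∇f a - ∇f b‖ + 2 * max ‖∇f a‖ ‖∇f b‖ * ‖a - b‖`, which gives continuity.
-/

open scoped NNReal

section FeasibleDirections

variable {E : Type*} [AddCommGroup E] [Module ℝ E] {X : Set E} {a b d x : E}

/-- The directions `d` feasible at `x` for a constraint set `X` within the unit ball of a seminorm
`q`: those with `x + d ∈ X` and `q d ≤ 1`. -/
def feasibleDirections (q : Seminorm ℝ E) (X : Set E) (x : E) : Set E :=
  {d | x + d ∈ X ∧ q d ≤ 1}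

theorem zero_mem_feasibleDirections (q : Seminorm ℝ E) (hx : x ∈ X) :
    0 ∈ feasibleDirections q X x := by
  simpa [feasibleDirections] using hx

theorem exists_mem_feasibleDirections_sub_le {q : Seminorm ℝ E} (hX : Convex ℝ X) (hb : b ∈ X)
    (hd : d ∈ feasibleDirections q X a) :
    ∃ e ∈ feasibleDirections q X b, q (e - d) ≤ 2 * q (a - b) := by
  have hpos : 0 < 1 + q (a - b) := by positivity
  set e := (1 + q (a - b))⁻¹ • (a + d - b)
  have he_scaled : (1 + q (a - b)) • e = a + d - b := smul_inv_smul₀ hpos.ne' _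
  have he_le_one : q e ≤ 1 := by
    have hle : q (a + d - b) ≤ 1 + q (a - b) := by
      calc q (a + d - b) = q (d + (a - b)) := by congr 1; abel
        _ ≤ q d + q (a - b) := map_add_le_add q _ _
        _ ≤ 1 + q (a - b) := by gcongr; exact hd.2
    rwa [← he_scaled, map_smul_eq_mul, Real.norm_of_nonneg hpos.le,
      mul_le_iff_le_one_right hpos] at hle
  have he_mem : b + e ∈ X :=
    hX.add_smul_sub_mem hb hd.1
      ⟨inv_nonneg.2 hpos.le, inv_le_one_of_one_le₀ (le_add_of_nonneg_right (apply_nonneg q _))⟩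
  have he_sub : e - d = (a - b) - q (a - b) • e := by
    linear_combination (norm := module) he_scaled
  refine ⟨e, ⟨he_mem, he_le_one⟩, ?_⟩
  calc q (e - d) = q ((a - b) - q (a - b) • e) := by rw [he_sub]
    _ ≤ q (a - b) + q (q (a - b) • e) := map_sub_le_add q _ _
    _ = q (a - b) + q (a - b) * q e := by
      rw [map_smul_eq_mul, Real.norm_of_nonneg (apply_nonneg q _)]
    _ ≤ q (a - b) + q (a - b) * 1 := by gcongr
    _ = 2 * q (a - b) := by ring

end FeasibleDirections

section DescentValue

variable {E ι : Type*} [SeminormedAddCommGroup E] [NormedSpace ℝ E]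
  {q : Seminorm ℝ E} {C : ℝ≥0} {X : Set E} {a b : E}

/-- The optimal value of the descent subproblem: the infimum, over the feasible directions `d` at
`x`, of the largest slope `L i d`. It is minus the criticality measure when the `L i` are the
differentials of the objectives at `x`. -/
def descentValue (q : Seminorm ℝ E) (X : Set E) (L : ι → E →L[ℝ] ℝ) (x : E) : ℝ :=
  sInf ((fun d => ⨆ i, L i d) '' feasibleDirections q X x)

theorem norm_le_of_mem_feasibleDirections (hC : ∀ v, ‖v‖ ≤ C * q v) {d : E}
    (hd : d ∈ feasibleDirections q X a) : ‖d‖ ≤ C :=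
  (hC d).trans (mul_le_of_le_one_right C.2 hd.2)

variable [Nonempty ι]

theorem iSup_apply_le_iSup_apply_add [Fintype ι] (L M : ι → E →L[ℝ] ℝ) (d e : E) :
    ⨆ i, M i e ≤ (⨆ i, L i d) + (‖M - L‖ * ‖e‖ + ‖L‖ * ‖e - d‖) := by
  refine ciSup_le fun i => ?_
  have hfunctional : (M - L) i e ≤ ‖M - L‖ * ‖e‖ :=
    (le_abs_self _).trans ((M - L) i |>.le_of_opNorm_le (norm_le_pi_norm (M - L) i) e)
  have hdirection : L i (e - d) ≤ ‖L‖ * ‖e - d‖ :=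
    (le_abs_self _).trans ((L i).le_of_opNorm_le (norm_le_pi_norm L i) (e - d))
  calc M i e = L i d + ((M - L) i e + L i (e - d)) := by
        simp only [Pi.sub_apply, sub_apply, map_sub]; ring
    _ ≤ (⨆ i, L i d) + (‖M - L‖ * ‖e‖ + ‖L‖ * ‖e - d‖) := by
        gcongr
        exact le_ciSup (Set.finite_range fun i => L i d).bddAbove i

theorem bddBelow_image_feasibleDirections [Finite ι] (hC : ∀ v, ‖v‖ ≤ C * q v)
    (L : ι → E →L[ℝ] ℝ) (a : E) :
    BddBelow ((fun d => ⨆ i, L i d) '' feasibleDirections q X a) := by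
  cases nonempty_fintype ι
  refine ⟨-(‖L‖ * C), ?_⟩
  rintro _ ⟨d, hd, rfl⟩
  have hneg : 0 ≤ (⨆ i, L i d) + ‖L‖ * ‖d‖ := by
    simpa using iSup_apply_le_iSup_apply_add L 0 d d
  have hle : ‖L‖ * ‖d‖ ≤ ‖L‖ * C := by
    gcongr
    exact norm_le_of_mem_feasibleDirections hC hd
  dsimp only
  linarith

theorem descentValue_le_descentValue_add [Fintype ι] (hC : ∀ v, ‖v‖ ≤ C * q v)
    (hX : Convex ℝ X) (ha : a ∈ X) (hb : b ∈ X) (L M : ι → E →L[ℝ] ℝ) :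
    descentValue q X M b ≤
      descentValue q X L a + C * (‖M - L‖ + 2 * ‖L‖ * q (a - b)) := by
  rw [← sub_le_iff_le_add]
  refine le_csInf ⟨_, 0, zero_mem_feasibleDirections q ha, rfl⟩ ?_
  rintro _ ⟨d, hd, rfl⟩
  obtain ⟨e, he, hed⟩ := exists_mem_feasibleDirections_sub_le hX hb hd
  rw [sub_le_iff_le_add]
  calc descentValue q X M b ≤ ⨆ i, M i e :=
        csInf_le (bddBelow_image_feasibleDirections hC M b) ⟨e, he, rfl⟩
    _ ≤ (⨆ i, L i d) + (‖M - L‖ * ‖e‖ + ‖L‖ * ‖e - d‖) := iSup_apply_le_iSup_apply_add L M d e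
    _ ≤ (⨆ i, L i d) + (‖M - L‖ * C + ‖L‖ * (C * (2 * q (a - b)))) := by
        gcongr
        · exact norm_le_of_mem_feasibleDirections hC he
        · exact (hC _).trans (by gcongr)
    _ = (⨆ i, L i d) + C * (‖M - L‖ + 2 * ‖L‖ * q (a - b)) := by ring

theorem abs_descentValue_sub_le [Fintype ι] (hC : ∀ v, ‖v‖ ≤ C * q v) (hX : Convex ℝ X)
    (ha : a ∈ X) (hb : b ∈ X) (L M : ι → E →L[ℝ] ℝ) :
    |descentValue q X L a - descentValue q X M b| ≤
      C * (‖L - M‖ + 2 * max ‖L‖ ‖M‖ * q (a - b)) := by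
  rw [abs_sub_le_iff, sub_le_iff_le_add', sub_le_iff_le_add']
  constructor
  · grw [descentValue_le_descentValue_add hC hX hb ha M L, map_sub_rev q b a,
      ← le_max_right ‖L‖ ‖M‖]
  · grw [descentValue_le_descentValue_add hC hX ha hb L M, norm_sub_rev M L,
      ← le_max_left ‖L‖ ‖M‖]

theorem continuousOn_descentValue [Finite ι] (hC : ∀ v, ‖v‖ ≤ C * q v) (hq : Continuous q)
    (hX : Convex ℝ X) {L : E → ι → E →L[ℝ] ℝ} (hL : ContinuousOn L X) :
    ContinuousOn (fun x => descentValue q X (L x) x) X := by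
  cases nonempty_fintype ι
  intro b hb
  have hbound : ContinuousWithinAt
      (fun a => C * (‖L a - L b‖ + 2 * max ‖L a‖ ‖L b‖ * q (a - b))) X b := by
    have := hL b hb
    fun_prop
  refine tendsto_iff_dist_tendsto_zero.2 (squeeze_zero' (.of_forall fun _ => dist_nonneg)
    (eventually_mem_nhdsWithin.mono fun a ha => ?_) (by simpa using hbound.tendsto))
  exact abs_descentValue_sub_le hC hX ha hb (L a) (L b)

end DescentValue

/-- `supNorm` bundled as a seminorm. -/
def supSeminorm (n : ℕ) : Seminorm ℝ (EuclideanSpace ℝ (Fin n)) :=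
  (normSeminorm ℝ (Fin n → ℝ)).comp (WithLp.linearEquiv 2 ℝ (Fin n → ℝ)).toLinearMap

theorem continuous_supSeminorm (n : ℕ) : Continuous (supSeminorm n) :=
  continuous_norm.comp (PiLp.continuous_ofLp 2 fun _ : Fin n => ℝ)

theorem exists_norm_le_mul_supSeminorm (n : ℕ) :
    ∃ C : ℝ≥0, ∀ v : EuclideanSpace ℝ (Fin n), ‖v‖ ≤ C * supSeminorm n v :=
  ⟨_, (PiLp.antilipschitzWith_ofLp 2 fun _ : Fin n => ℝ).le_mul_norm rfl⟩

theorem omega_eq_neg_descentValue {n k : ℕ} (X : Set (EuclideanSpace ℝ (Fin n)))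
    (f : Fin k → EuclideanSpace ℝ (Fin n) → ℝ) (x : EuclideanSpace ℝ (Fin n)) :
    omega X f x = -descentValue (supSeminorm n) X (fun ℓ => fderiv ℝ (f ℓ) x) x :=
  rfl

theorem omega_continuous_general
    {n k : ℕ} (hk : 1 ≤ k) {X : Set (EuclideanSpace ℝ (Fin n))} (hX : Convex ℝ X)
    {f : Fin k → EuclideanSpace ℝ (Fin n) → ℝ}
    {U : Set (EuclideanSpace ℝ (Fin n))} (hU : IsOpen U) (hXU : X ⊆ U)
    (hf : ∀ ℓ, ContDiffOn ℝ 1 (f ℓ) U) :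
    ContinuousOn (omega X f) X := by
  have : Nonempty (Fin k) := ⟨⟨0, hk⟩⟩
  obtain ⟨C, hC⟩ := exists_norm_le_mul_supSeminorm n
  have hfderiv : ContinuousOn (fun x ℓ => fderiv ℝ (f ℓ) x) X :=
    continuousOn_pi.2 fun ℓ => ((hf ℓ).continuousOn_fderiv_of_isOpen hU le_rfl).mono hXU
  exact (continuousOn_descentValue hC (continuous_supSeminorm n) hX hfderiv).neg.congr
    fun x _ => omega_eq_neg_descentValue X f x

/-- Theorem 2.2(2): the criticality measure `ω` is continuous on `X`:
for every sequence `x⁽ᵗ⁾ ∈ X` converging to `x ∈ X`, `ω(x⁽ᵗ⁾) → ω(x)`. -/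
theorem omega_continuous
    (n k : ℕ) (hk : 1 ≤ k)
    (X : Set (EuclideanSpace ℝ (Fin n)))
    (hXne : X.Nonempty) (hXconv : Convex ℝ X) (hXcomp : IsCompact X)
    (f : Fin k → EuclideanSpace ℝ (Fin n) → ℝ)
    (U : Set (EuclideanSpace ℝ (Fin n))) (hUopen : IsOpen U) (hXU : X ⊆ U)
    (hf : ∀ ℓ, ContDiffOn ℝ 1 (f ℓ) U)
    (xseq : ℕ → EuclideanSpace ℝ (Fin n)) (hxseq : ∀ t, xseq t ∈ X)
    (x : EuclideanSpace ℝ (Fin n)) (hx : x ∈ X)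
    (hlim : Filter.Tendsto xseq Filter.atTop (nhds x)) :
    Filter.Tendsto (fun t => omega X f (xseq t)) Filter.atTop (nhds (omega X f x)) :=
  (omega_continuous_general hk hXconv hUopen hXU hf x hx).tendsto.comp
    (tendsto_nhdsWithin_iff.2 ⟨hlim, .of_forall hxseq⟩)
end
end

section
/- Let d* be a minimizer of the model steepest-descent problem min over {d : x₀ + d ∈ X, ‖d‖_∞ ≤ 1} of max_ℓ ⟨∇m_ℓ(x₀), d⟩, so that ω_m(x₀) = − max_ℓ ⟨∇m_ℓ(x₀), d*⟩, and let x_PC := x₀ + σ*·d* be a Pareto-Cauchy point, i.e. σ* minimizes σ ↦ Φ_m(x₀ + σ·d*) over {σ ≥ 0 : x₀ + σ·d* ∈ B}. Then Φ_m(x₀) − Φ_m(x_PC) ≥ (1/2) · ω_m(x₀) · min{ ω_m(x₀)/(c·H), Δ, 1 }. (Theorem 5.2.) -/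
noncomputable section

/-- Frobenius norm of the Hessian of `g : ℝⁿ → ℝ` at `x`. -/
def frobHess {n : ℕ} (g : EuclideanSpace ℝ (Fin n) → ℝ)
    (x : EuclideanSpace ℝ (Fin n)) : ℝ :=
  Real.sqrt (∑ i : Fin n, ∑ j : Fin n,
    (fderiv ℝ (fun y => fderiv ℝ g y (EuclideanSpace.single j (1:ℝ))) x
      (EuclideanSpace.single i (1:ℝ))) ^ 2)

/-! Along the segment from `x₀` in the direction `d*`, every objective satisfies the second order
bound `m_ℓ(x₀ + s d*) ≤ m_ℓ(x₀) - s ω + s² c H / 2`, because `‖d*‖₂² ≤ c` and the operator norm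
of a Hessian is at most its Frobenius norm. As long as `s c H ≤ ω`, the quadratic term consumes at
most half of the linear decrease. The step `s = min {ω / (c H), Δ, 1}` has this property and stays
in the trust region, so the minimizing step does at least as well. If `c H = 0`, then `ω / (c H)` is
`0` in Lean, and so is this `s`. -/

open Set

section SecondOrderBound

lemma le_add_deriv_mul_add_sq_of_deriv2_le {f f' f'' : ℝ → ℝ} {a b K : ℝ} (hab : a ≤ b)
    (hf : ∀ t ∈ Icc a b, HasDerivAt f (f' t) t) (hf' : ∀ t ∈ Icc a b, HasDerivAt f' (f'' t) t)
    (hK : ∀ t ∈ Icc a b, f'' t ≤ K) :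
    f b ≤ f a + f' a * (b - a) + K / 2 * (b - a) ^ 2 := by
  have hline (t : ℝ) : HasDerivAt (fun t ↦ f' a + K * (t - a)) K t := by
    simpa using (((hasDerivAt_id t).sub_const a).const_mul K).const_add (f' a)
  have hparabola (t : ℝ) :
      HasDerivAt (fun t ↦ f a + f' a * (t - a) + K / 2 * (t - a) ^ 2) (f' a + K * (t - a)) t := by
    have hsub := (hasDerivAt_id t).sub_const a
    refine (((hsub.const_mul (f' a)).const_add (f a)).add
      ((hsub.pow 2).const_mul (K / 2))).congr_deriv ?_
    simp only [id_eq, Nat.cast_ofNat]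
    ring
  have hslope : ∀ t ∈ Icc a b, f' t ≤ f' a + K * (t - a) :=
    image_le_of_deriv_right_le_deriv_boundary
      (fun t ht ↦ (hf' t ht).continuousAt.continuousWithinAt)
      (fun t ht ↦ (hf' t (Ico_subset_Icc_self ht)).hasDerivWithinAt) (by simp)
      (fun t _ ↦ (hline t).continuousAt.continuousWithinAt)
      (fun t _ ↦ (hline t).hasDerivWithinAt) (fun t ht ↦ hK t (Ico_subset_Icc_self ht))
  exact image_le_of_deriv_right_le_deriv_boundary
    (fun t ht ↦ (hf t ht).continuousAt.continuousWithinAt)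
    (fun t ht ↦ (hf t (Ico_subset_Icc_self ht)).hasDerivWithinAt) (by simp)
    (fun t _ ↦ (hparabola t).continuousAt.continuousWithinAt)
    (fun t _ ↦ (hparabola t).hasDerivWithinAt)
    (fun t ht ↦ hslope t (Ico_subset_Icc_self ht)) (right_mem_Icc.2 hab)

variable {E : Type*} [NormedAddCommGroup E] [NormedSpace ℝ E]

lemma le_add_fderiv_add_sq_of_fderiv2_le {g : E → ℝ} {x d : E} {s K : ℝ} (hs : 0 ≤ s)
    (hg : ∀ t ∈ Icc 0 s, DifferentiableAt ℝ g (x + t • d))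
    (hg' : ∀ t ∈ Icc 0 s, DifferentiableAt ℝ (fderiv ℝ g) (x + t • d))
    (hK : ∀ t ∈ Icc 0 s, fderiv ℝ (fderiv ℝ g) (x + t • d) d d ≤ K) :
    g (x + s • d) ≤ g x + s * fderiv ℝ g x d + K / 2 * s ^ 2 := by
  have hline (t : ℝ) : HasDerivAt (fun t : ℝ ↦ x + t • d) d t := by
    simpa using ((hasDerivAt_id t).smul_const d).const_add x
  have hderiv : ∀ t ∈ Icc 0 s,
      HasDerivAt (fun t : ℝ ↦ g (x + t • d)) (fderiv ℝ g (x + t • d) d) t := fun t ht ↦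
    (hg t ht).hasFDerivAt.comp_hasDerivAt t (hline t)
  have hderiv2 : ∀ t ∈ Icc 0 s, HasDerivAt (fun t : ℝ ↦ fderiv ℝ g (x + t • d) d)
      (fderiv ℝ (fderiv ℝ g) (x + t • d) d d) t := fun t ht ↦
    (ContinuousLinearMap.apply ℝ ℝ d).hasFDerivAt.comp_hasDerivAt t
      ((hg' t ht).hasFDerivAt.comp_hasDerivAt t (hline t))
  simpa [mul_comm s] using le_add_deriv_mul_add_sq_of_deriv2_le hs hderiv hderiv2 hK

lemma apply_apply_le_mul_of_opNorm_le {A : E →L[ℝ] E →L[ℝ] ℝ} {d : E} {c H : ℝ}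
    (hd : ‖d‖ ^ 2 ≤ c) (hA : ‖A‖ ≤ H) : A d d ≤ c * H :=
  calc A d d ≤ ‖A‖ * ‖d‖ * ‖d‖ := (Real.le_norm_self _).trans (A.le_opNorm₂ d d)
    _ = ‖d‖ ^ 2 * ‖A‖ := by ring
    _ ≤ c * H := mul_le_mul hd hA (norm_nonneg A) ((sq_nonneg _).trans hd)

lemma differentiableAt_fderiv_of_contDiffOn {F : Type*} [NormedAddCommGroup F] [NormedSpace ℝ F]
    {g : E → F} {U : Set E} {x : E} (hU : IsOpen U) (hg : ContDiffOn ℝ 2 g U) (hx : x ∈ U) :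
    DifferentiableAt ℝ (fderiv ℝ g) x :=
  ((hg.contDiffAt (hU.mem_nhds hx)).fderiv_right le_rfl).differentiableAt one_ne_zero

end SecondOrderBound

lemma opNorm_le_sqrt_sum_sq_norm_apply {𝕜 ι E F : Type*} [RCLike 𝕜] [Fintype ι]
    [NormedAddCommGroup E] [InnerProductSpace 𝕜 E] [SeminormedAddCommGroup F] [NormedSpace 𝕜 F]
    (b : OrthonormalBasis ι 𝕜 E) (A : E →L[𝕜] F) : ‖A‖ ≤ √(∑ i, ‖A (b i)‖ ^ 2) := by
  refine A.opNorm_le_bound (Real.sqrt_nonneg _) fun x ↦ ?_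
  calc ‖A x‖ = ‖∑ i, inner 𝕜 (b i) x • A (b i)‖ := by
        conv_lhs => rw [← b.sum_repr' x, map_sum]
        simp only [map_smul]
    _ ≤ ∑ i, ‖A (b i)‖ * ‖inner 𝕜 (b i) x‖ :=
        norm_sum_le_of_le _ fun i _ ↦ by rw [norm_smul, mul_comm]
    _ ≤ √(∑ i, ‖A (b i)‖ ^ 2) * √(∑ i, ‖inner 𝕜 (b i) x‖ ^ 2) :=
        Real.sum_mul_le_sqrt_mul_sqrt _ _ _
    _ = √(∑ i, ‖A (b i)‖ ^ 2) * ‖x‖ := by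
        rw [b.sum_sq_norm_inner_right, Real.sqrt_sq (norm_nonneg x)]

lemma opNorm_le_sqrt_sum_sum_sq_norm_apply {𝕜 ι κ E F G : Type*} [RCLike 𝕜] [Fintype ι] [Fintype κ]
    [NormedAddCommGroup E] [InnerProductSpace 𝕜 E] [NormedAddCommGroup F] [InnerProductSpace 𝕜 F]
    [SeminormedAddCommGroup G] [NormedSpace 𝕜 G]
    (b : OrthonormalBasis ι 𝕜 E) (e : OrthonormalBasis κ 𝕜 F) (A : E →L[𝕜] F →L[𝕜] G) :
    ‖A‖ ≤ √(∑ i, ∑ j, ‖A (b i) (e j)‖ ^ 2) := by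
  refine (opNorm_le_sqrt_sum_sq_norm_apply b A).trans ?_
  gcongr with i
  exact (Real.le_sqrt (norm_nonneg _) (by positivity)).1
    (opNorm_le_sqrt_sum_sq_norm_apply e (A (b i)))

section ParetoCauchy

variable {E ι : Type*} [NormedAddCommGroup E] [NormedSpace ℝ E] [Finite ι] [Nonempty ι]
  {m : ι → E → ℝ} {x d : E}

lemma iSup_add_smul_le_iSup_sub {s K ω : ℝ} (hs : 0 ≤ s) (hsK : s * K ≤ ω)
    (hm : ∀ ℓ, ∀ t ∈ Icc 0 s, DifferentiableAt ℝ (m ℓ) (x + t • d))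
    (hm' : ∀ ℓ, ∀ t ∈ Icc 0 s, DifferentiableAt ℝ (fderiv ℝ (m ℓ)) (x + t • d))
    (hK : ∀ ℓ, ∀ t ∈ Icc 0 s, fderiv ℝ (fderiv ℝ (m ℓ)) (x + t • d) d d ≤ K)
    (hω : ∀ ℓ, fderiv ℝ (m ℓ) x d ≤ -ω) :
    ⨆ ℓ, m ℓ (x + s • d) ≤ (⨆ ℓ, m ℓ x) - 1 / 2 * ω * s := by
  refine ciSup_le fun ℓ ↦ ?_
  calc m ℓ (x + s • d)
      ≤ m ℓ x + s * fderiv ℝ (m ℓ) x d + K / 2 * s ^ 2 :=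
        le_add_fderiv_add_sq_of_fderiv2_le hs (hm ℓ) (hm' ℓ) (hK ℓ)
    _ = m ℓ x + s * fderiv ℝ (m ℓ) x d + s * K * s / 2 := by ring
    _ ≤ (⨆ ℓ, m ℓ x) + s * -ω + ω * s / 2 := by
        gcongr
        · exact le_ciSup (f := fun ℓ ↦ m ℓ x) (finite_range _).bddAbove ℓ
        · exact hω ℓ
    _ = (⨆ ℓ, m ℓ x) - 1 / 2 * ω * s := by ring

lemma add_smul_mem_inter_closedBall {p : Seminorm ℝ E} {X : Set E} {t r : ℝ}
    (hX : StarConvex ℝ x X) (hdX : x + d ∈ X) (hpd : p d ≤ 1)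
    (ht : 0 ≤ t) (ht1 : t ≤ 1) (htr : t ≤ r) : x + t • d ∈ X ∩ p.closedBall x r := by
  refine ⟨hX.add_smul_mem hdX ht ht1, (p.mem_closedBall).2 ?_⟩
  calc p (x + t • d - x) = t * p d := by
        rw [add_sub_cancel_left, map_smul_eq_mul, Real.norm_of_nonneg ht]
    _ ≤ r := (mul_le_of_le_one_right ht hpd).trans htr

theorem pareto_cauchy_sufficient_decrease_general (p : Seminorm ℝ E) {X : Set E} {Δ H c ω σ : ℝ}
    (hX : StarConvex ℝ x X) (hΔ : 0 ≤ Δ)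
    (hm : ∀ ℓ, ∀ y ∈ X ∩ p.closedBall x Δ, DifferentiableAt ℝ (m ℓ) y)
    (hm' : ∀ ℓ, ∀ y ∈ X ∩ p.closedBall x Δ, DifferentiableAt ℝ (fderiv ℝ (m ℓ)) y)
    (hH : ∀ ℓ, ∀ y ∈ X ∩ p.closedBall x Δ, ‖fderiv ℝ (fderiv ℝ (m ℓ)) y‖ ≤ H)
    (hdX : x + d ∈ X) (hpd : p d ≤ 1) (hdc : ‖d‖ ^ 2 ≤ c)
    (hω₀ : 0 ≤ ω) (hω : ∀ ℓ, fderiv ℝ (m ℓ) x d ≤ -ω)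
    (hσ : IsMinOn (fun t : ℝ ↦ ⨆ ℓ, m ℓ (x + t • d))
      {t | 0 ≤ t ∧ x + t • d ∈ X ∩ p.closedBall x Δ} σ) :
    1 / 2 * ω * min (ω / (c * H)) (min Δ 1) ≤ (⨆ ℓ, m ℓ x) - ⨆ ℓ, m ℓ (x + σ • d) := by
  set s := min (ω / (c * H)) (min Δ 1)
  have hs1 : s ≤ 1 := (min_le_right _ _).trans (min_le_right _ _)
  have hsΔ : s ≤ Δ := (min_le_right _ _).trans (min_le_left _ _)
  have hsegment : ∀ t ∈ Icc 0 s, x + t • d ∈ X ∩ p.closedBall x Δ := fun t ht ↦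
    add_smul_mem_inter_closedBall hX hdX hpd ht.1 (ht.2.trans hs1) (ht.2.trans hsΔ)
  have hx : x ∈ X ∩ p.closedBall x Δ := by
    simpa using add_smul_mem_inter_closedBall hX hdX hpd le_rfl zero_le_one hΔ
  have hH₀ : 0 ≤ H := by
    obtain ⟨ℓ⟩ := ‹Nonempty ι›
    exact (norm_nonneg (fderiv ℝ (fderiv ℝ (m ℓ)) x)).trans (hH ℓ x hx)
  have hcH : 0 ≤ c * H := mul_nonneg ((sq_nonneg _).trans hdc) hH₀
  have hs : 0 ≤ s := le_min (div_nonneg hω₀ hcH) (le_min hΔ zero_le_one)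
  have hcurvature : ∀ ℓ, ∀ t ∈ Icc 0 s, fderiv ℝ (fderiv ℝ (m ℓ)) (x + t • d) d d ≤ c * H :=
    fun ℓ t ht ↦ apply_apply_le_mul_of_opNorm_le hdc (hH ℓ _ (hsegment t ht))
  have hdecrease : ⨆ ℓ, m ℓ (x + s • d) ≤ (⨆ ℓ, m ℓ x) - 1 / 2 * ω * s :=
    iSup_add_smul_le_iSup_sub hs (mul_le_of_le_div₀ hω₀ hcH (min_le_left _ _))
      (fun ℓ t ht ↦ hm ℓ _ (hsegment t ht)) (fun ℓ t ht ↦ hm' ℓ _ (hsegment t ht)) hcurvature hω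
  have hcauchy : ⨆ ℓ, m ℓ (x + σ • d) ≤ ⨆ ℓ, m ℓ (x + s • d) :=
    isMinOn_iff.1 hσ s ⟨hs, hsegment s (right_mem_Icc.2 hs)⟩
  linarith

end ParetoCauchy

section Euclidean

variable {n : ℕ} {g : EuclideanSpace ℝ (Fin n) → ℝ} {x : EuclideanSpace ℝ (Fin n)}
  {X U : Set (EuclideanSpace ℝ (Fin n))}

lemma frobHess_eq_sqrt_sum_fderiv_fderiv (hg : DifferentiableAt ℝ (fderiv ℝ g) x) :
    frobHess g x = √(∑ i, ∑ j, (fderiv ℝ (fderiv ℝ g) x (EuclideanSpace.single i 1)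
      (EuclideanSpace.single j 1)) ^ 2) := by
  simp [frobHess, fderiv_clm_apply hg (differentiableAt_const _)]

lemma norm_fderiv_fderiv_le_frobHess (hg : DifferentiableAt ℝ (fderiv ℝ g) x) :
    ‖fderiv ℝ (fderiv ℝ g) x‖ ≤ frobHess g x := by
  simpa [frobHess_eq_sqrt_sum_fderiv_fderiv hg] using
    opNorm_le_sqrt_sum_sum_sq_norm_apply (EuclideanSpace.basisFun (Fin n) ℝ)
      (EuclideanSpace.basisFun (Fin n) ℝ) (fderiv ℝ (fderiv ℝ g) x)

lemma continuousOn_frobHess (hU : IsOpen U) (hg : ContDiffOn ℝ 2 g U) :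
    ContinuousOn (frobHess g) U := by
  have hcont : ContinuousOn (fderiv ℝ (fderiv ℝ g)) U :=
    (hg.fderiv_of_isOpen (m := 1) hU le_rfl).continuousOn_fderiv_of_isOpen hU le_rfl
  refine ContinuousOn.congr ?_ fun x hx ↦
    frobHess_eq_sqrt_sum_fderiv_fderiv (differentiableAt_fderiv_of_contDiffOn hU hg hx)
  fun_prop

lemma norm_fderiv_fderiv_le_iSup_frobHess {ι : Type*} [Finite ι]
    {m : ι → EuclideanSpace ℝ (Fin n) → ℝ} {B : Set (EuclideanSpace ℝ (Fin n))} (hU : IsOpen U)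
    (hm : ∀ ℓ, ContDiffOn ℝ 2 (m ℓ) U) (hX : IsCompact X) (hXU : X ⊆ U) (hBX : B ⊆ X) (ℓ : ι)
    (hx : x ∈ B) : ‖fderiv ℝ (fderiv ℝ (m ℓ)) x‖ ≤ ⨆ ℓ, ⨆ y : B, frobHess (m ℓ) y := by
  have hbdd : BddAbove (range fun y : B ↦ frobHess (m ℓ) y) := by
    rw [← image_eq_range]
    exact (hX.bddAbove_image ((continuousOn_frobHess hU (hm ℓ)).mono hXU)).mono (image_mono hBX)
  calc ‖fderiv ℝ (fderiv ℝ (m ℓ)) x‖ ≤ frobHess (m ℓ) x :=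
        norm_fderiv_fderiv_le_frobHess
          (differentiableAt_fderiv_of_contDiffOn hU (hm ℓ) (hXU (hBX hx)))
    _ ≤ ⨆ ℓ, ⨆ y : B, frobHess (m ℓ) y :=
        le_ciSup_of_le (finite_range _).bddAbove ℓ (le_ciSup hbdd ⟨x, hx⟩)

lemma omega_nonneg {k : ℕ} {m : Fin k → EuclideanSpace ℝ (Fin n) → ℝ} (hx : x ∈ X) :
    0 ≤ omega X m x := by
  refine neg_nonneg.2 (Real.sInf_nonpos' ⟨_, mem_image_of_mem _ (x := 0) ?_, by simp⟩)
  simpa [supNorm] using hx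

/-- The norm `supNorm` bundled as a `Seminorm`, so that the trust region `B` is definitionally
`X ∩ (supNormSeminorm n).closedBall x₀ Δ`. -/
def supNormSeminorm (n : ℕ) : Seminorm ℝ (EuclideanSpace ℝ (Fin n)) :=
  (normSeminorm ℝ (Fin n → ℝ)).comp (WithLp.linearEquiv 2 ℝ (Fin n → ℝ)).toLinearMap

end Euclidean

/-- Theorem 5.2: the Pareto–Cauchy point `x_PC = x₀ + σ*·d*` along the model
steepest-descent direction `d*` achieves the sufficient decrease
`Φ_m(x₀) − Φ_m(x_PC) ≥ (1/2)·ω_m(x₀)·min{ω_m(x₀)/(c·H), Δ, 1}`. -/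
theorem pareto_cauchy_sufficient_decrease
    (n k : ℕ) (hk : 1 ≤ k)
    (X : Set (EuclideanSpace ℝ (Fin n)))
    (hXne : X.Nonempty) (hXconv : Convex ℝ X) (hXcomp : IsCompact X)
    (m : Fin k → EuclideanSpace ℝ (Fin n) → ℝ)
    (U : Set (EuclideanSpace ℝ (Fin n))) (hUopen : IsOpen U) (hXU : X ⊆ U)
    (hm : ∀ ℓ, ContDiffOn ℝ 2 (m ℓ) U)
    (x₀ : EuclideanSpace ℝ (Fin n)) (hx₀ : x₀ ∈ X)
    (Δ : ℝ) (hΔ : 0 < Δ)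
    (B : Set (EuclideanSpace ℝ (Fin n))) (hB : B = {y ∈ X | supNorm (y - x₀) ≤ Δ})
    (H : ℝ) (hH : H = ⨆ ℓ : Fin k, ⨆ y : B, frobHess (m ℓ) (y : EuclideanSpace ℝ (Fin n)))
    (c : ℝ) (hc : 0 < c)
    (hcn : ∀ v : EuclideanSpace ℝ (Fin n), ‖v‖ ≤ Real.sqrt c * supNorm v)
    -- `d*` is a minimizer of the model steepest-descent problem at `x₀`
    (dstar : EuclideanSpace ℝ (Fin n))
    (hd1 : x₀ + dstar ∈ X) (hd2 : supNorm dstar ≤ 1)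
    (hdmin : ∀ d : EuclideanSpace ℝ (Fin n), x₀ + d ∈ X → supNorm d ≤ 1 →
      (⨆ ℓ, fderiv ℝ (m ℓ) x₀ dstar) ≤ (⨆ ℓ, fderiv ℝ (m ℓ) x₀ d))
    (hω : omega X m x₀ = -(⨆ ℓ, fderiv ℝ (m ℓ) x₀ dstar))
    -- `σ*` minimizes `Φ_m(x₀ + σ·d*)` over `{σ ≥ 0 : x₀ + σ·d* ∈ B}`
    (σstar : ℝ) (hσ0 : 0 ≤ σstar) (hσB : x₀ + σstar • dstar ∈ B)
    (hσmin : ∀ σ : ℝ, 0 ≤ σ → x₀ + σ • dstar ∈ B →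
      (⨆ ℓ, m ℓ (x₀ + σstar • dstar)) ≤ ⨆ ℓ, m ℓ (x₀ + σ • dstar)) :
    (⨆ ℓ, m ℓ x₀) - (⨆ ℓ, m ℓ (x₀ + σstar • dstar))
      ≥ (1/2) * omega X m x₀ * min (omega X m x₀ / (c * H)) (min Δ 1) := by
  have : Nonempty (Fin k) := ⟨⟨0, hk⟩⟩
  subst hB hH
  have hdc : ‖dstar‖ ^ 2 ≤ c := (Real.le_sqrt (norm_nonneg _) hc.le).1
    ((hcn dstar).trans (mul_le_of_le_one_right (Real.sqrt_nonneg c) hd2))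
  have hslope : ∀ ℓ, fderiv ℝ (m ℓ) x₀ dstar ≤ -omega X m x₀ := fun ℓ ↦ by
    rw [hω, neg_neg]
    exact le_ciSup (f := fun ℓ ↦ fderiv ℝ (m ℓ) x₀ dstar) (finite_range _).bddAbove ℓ
  exact pareto_cauchy_sufficient_decrease_general (supNormSeminorm n)
    (hXconv.starConvex hx₀) hΔ.le
    (fun ℓ y hy ↦ ((hm ℓ).differentiableOn two_ne_zero).differentiableAt
      (hUopen.mem_nhds (hXU hy.1)))
    (fun ℓ y hy ↦ differentiableAt_fderiv_of_contDiffOn hUopen (hm ℓ) (hXU hy.1))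
    (fun ℓ y hy ↦ norm_fderiv_fderiv_le_iSup_frobHess hUopen hm hXcomp hXU (fun _ hz ↦ hz.1) ℓ hy)
    hd1 hd2 hdc (omega_nonneg hx₀) hslope (isMinOn_iff.2 fun σ hσ ↦ hσmin σ hσ.1 hσ.2)
end
end
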